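/- arXiv:0704.3576 — 2 statements merged into one kernel-verified Lean document; each statement's English description precedes it below -/
import Mathlib

section
/- Eigenfunction property: fix a real ν > 0 and ξ ∈ ℂ, and for ψ : ℂ×ℂ → ℂ define (L_{ν,ξ} ψ)(z,w) := -(1/4)·[ 4·∂²ψ/∂z∂w (z,w) + 2·( (ν·z + ξ)·∂ψ/∂z (z,w) - (ν·w + conj(ξ))·∂ψ/∂w (z,w) ) - (ν·z + ξ)·(ν·w + conj(ξ))·ψ(z,w) ], where ∂/∂z and ∂/∂w are the complex partial derivatives and ∂²/∂z∂w is the derivative first in w, then in z. Then for all nonnegative integers m, n, the function g^{m,n}(z,w) := exp(-(w/2)·(ν·z + ξ))·G_ν^{m,n}(z,w|ξ) satisfies L_{ν,ξ} g^{m,n} = ν·(n + 1/2)·g^{m,n} at every point (z,w) ∈ ℂ². -/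
/-!
Write `A = ν z + ξ` and `u = ν w + conj ξ / 2`. Conjugating `L_{ν,ξ}` by the factor
`exp (-(w / 2) * A)` cancels all terms containing `A` and leaves, on a function `H (z, u)`,
the operator `ν (u ∂_u - ∂_z ∂_u + 1/2)`. Thus the claim is the differential equation
`u ∂_u H - ∂_z ∂_u H = n H` for the complex Hermite polynomial `H = H^{m,n}` (`cH_ode`). With
`H = ∑ c_j z^{m-j} u^{n-j}` it amounts to the coefficient recursion
`(j + 1) c_{j+1} = -(m - j) (n - j) c_j`.
-/

open Complex MeasureTheory

/-- The complex Hermite polynomials in two independent complex variables. -/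
noncomputable def cH (m n : ℕ) (z w : ℂ) : ℂ :=
  (m.factorial : ℂ) * (n.factorial : ℂ) *
    ∑ j ∈ Finset.range (min m n + 1),
      (-1 : ℂ) ^ j * z ^ (m - j) * w ^ (n - j) /
        ((j.factorial : ℂ) * ((m - j).factorial : ℂ) * ((n - j).factorial : ℂ))

/-- The generalized complex Hermite polynomials (GCHP). -/
noncomputable def G (ν : ℝ) (ξ : ℂ) (m n : ℕ) (z w : ℂ) : ℂ :=
  cH m n z ((ν : ℂ) * w + (starRingEnd ℂ) ξ / 2)

/-- The coefficient of `z ^ (m - j) * w ^ (n - j)` in the complex Hermite polynomial. -/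
noncomputable def cHcoeff (m n j : ℕ) : ℂ :=
  (m.factorial : ℂ) * (n.factorial : ℂ) * (-1 : ℂ) ^ j /
    ((j.factorial : ℂ) * ((m - j).factorial : ℂ) * ((n - j).factorial : ℂ))

/-- The partial derivative of `cH m n` in the first variable. -/
noncomputable def cHz (m n : ℕ) (z w : ℂ) : ℂ :=
  ∑ j ∈ Finset.range (min m n + 1),
    cHcoeff m n j * (((m - j : ℕ) : ℂ) * z ^ (m - j - 1)) * w ^ (n - j)

/-- The partial derivative of `cH m n` in the second variable. -/
noncomputable def cHw (m n : ℕ) (z w : ℂ) : ℂ :=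
  ∑ j ∈ Finset.range (min m n + 1),
    cHcoeff m n j * z ^ (m - j) * (((n - j : ℕ) : ℂ) * w ^ (n - j - 1))

/-- The mixed second partial derivative of `cH m n`. -/
noncomputable def cHwz (m n : ℕ) (z w : ℂ) : ℂ :=
  ∑ j ∈ Finset.range (min m n + 1),
    cHcoeff m n j * (((m - j : ℕ) : ℂ) * z ^ (m - j - 1)) *
      (((n - j : ℕ) : ℂ) * w ^ (n - j - 1))

lemma cH_eq_sum (m n : ℕ) (z w : ℂ) :
    cH m n z w = ∑ j ∈ Finset.range (min m n + 1),
      cHcoeff m n j * z ^ (m - j) * w ^ (n - j) := by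
  unfold cH cHcoeff
  rw [Finset.mul_sum]
  refine Finset.sum_congr rfl fun j _ => ?_
  ring

lemma hasDerivAt_cH_fst (m n : ℕ) (z w : ℂ) :
    HasDerivAt (fun z' => cH m n z' w) (cHz m n z w) z := by
  simp only [cH_eq_sum]
  exact HasDerivAt.fun_sum fun j _ => ((hasDerivAt_pow (m - j) z).const_mul _).mul_const _

lemma hasDerivAt_cH_snd (m n : ℕ) (z w : ℂ) :
    HasDerivAt (fun w' => cH m n z w') (cHw m n z w) w := by
  simp only [cH_eq_sum]
  exact HasDerivAt.fun_sum fun j _ => (hasDerivAt_pow (n - j) w).const_mul _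

lemma hasDerivAt_cHw_fst (m n : ℕ) (z w : ℂ) :
    HasDerivAt (fun z' => cHw m n z' w) (cHwz m n z w) z :=
  HasDerivAt.fun_sum fun j _ => ((hasDerivAt_pow (m - j) z).const_mul _).mul_const _

lemma cHcoeff_succ (m n j : ℕ) (hm : j < m) (hn : j < n) :
    ((j + 1 : ℕ) : ℂ) * cHcoeff m n (j + 1) =
      -(((m - j : ℕ) : ℂ) * ((n - j : ℕ) : ℂ) * cHcoeff m n j) := by
  obtain ⟨a, rfl⟩ := Nat.exists_eq_add_of_lt hm
  obtain ⟨b, rfl⟩ := Nat.exists_eq_add_of_lt hn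
  have ha : j + a + 1 - j = a + 1 := by omega
  have hb : j + b + 1 - j = b + 1 := by omega
  have ha' : j + a + 1 - (j + 1) = a := by omega
  have hb' : j + b + 1 - (j + 1) = b := by omega
  unfold cHcoeff
  rw [ha, hb, ha', hb', Nat.factorial_succ j, Nat.factorial_succ a, Nat.factorial_succ b]
  have h1 : ((j + 1 : ℕ) : ℂ) ≠ 0 := Nat.cast_ne_zero.2 (Nat.succ_ne_zero j)
  have h2 : ((a + 1 : ℕ) : ℂ) ≠ 0 := Nat.cast_ne_zero.2 (Nat.succ_ne_zero a)
  have h3 : ((b + 1 : ℕ) : ℂ) ≠ 0 := Nat.cast_ne_zero.2 (Nat.succ_ne_zero b)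
  have h4 : (j.factorial : ℂ) ≠ 0 := Nat.cast_ne_zero.2 j.factorial_ne_zero
  have h5 : (a.factorial : ℂ) ≠ 0 := Nat.cast_ne_zero.2 a.factorial_ne_zero
  have h6 : (b.factorial : ℂ) ≠ 0 := Nat.cast_ne_zero.2 b.factorial_ne_zero
  rw [Nat.cast_mul (j + 1), Nat.cast_mul (a + 1), Nat.cast_mul (b + 1), pow_succ]
  field_simp

/-- The mixed derivative multiplies the `j`-th term of the Hermite sum by `-j`, after a shift of
the summation index. -/
lemma cHwz_eq (m n : ℕ) (z w : ℂ) :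
    cHwz m n z w = -∑ j ∈ Finset.range (min m n + 1),
      (j : ℂ) * (cHcoeff m n j * z ^ (m - j) * w ^ (n - j)) := by
  unfold cHwz
  -- The term `j = min m n` of the mixed derivative and the term `j = 0` on the right vanish.
  have hlast : ((m - min m n : ℕ) : ℂ) * ((n - min m n : ℕ) : ℂ) = 0 := by
    rcases le_total m n with h | h <;> simp [h]
  rw [Finset.sum_range_succ, Finset.sum_range_succ', ← sub_eq_zero]
  have hsum : ∑ j ∈ Finset.range (min m n),
      cHcoeff m n j * (((m - j : ℕ) : ℂ) * z ^ (m - j - 1)) *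
        (((n - j : ℕ) : ℂ) * w ^ (n - j - 1)) =
      -∑ j ∈ Finset.range (min m n), ((j + 1 : ℕ) : ℂ) *
        (cHcoeff m n (j + 1) * z ^ (m - (j + 1)) * w ^ (n - (j + 1))) := by
    rw [← Finset.sum_neg_distrib]
    refine Finset.sum_congr rfl fun j hj => ?_
    have hj' := lt_min_iff.1 (Finset.mem_range.1 hj)
    rw [Nat.sub_sub, Nat.sub_sub]
    linear_combination (z ^ (m - (j + 1)) * w ^ (n - (j + 1))) *
      cHcoeff_succ m n j hj'.1 hj'.2
  rw [hsum, Nat.cast_zero]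
  linear_combination (cHcoeff m n (min m n) * z ^ (m - min m n - 1) *
    w ^ (n - min m n - 1)) * hlast

/-- The differential equation `w ∂_w H - ∂_z ∂_w H = n H` of the complex Hermite polynomials. -/
lemma cH_ode (m n : ℕ) (z w : ℂ) :
    w * cHw m n z w - cHwz m n z w = n * cH m n z w := by
  rw [cHwz_eq, cH_eq_sum, cHw, sub_neg_eq_add, Finset.mul_sum, Finset.mul_sum,
    ← Finset.sum_add_distrib]
  refine Finset.sum_congr rfl fun j hj => ?_
  have hjn : j ≤ n := by
    have := Finset.mem_range.1 hj
    omega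
  obtain ⟨b, rfl⟩ := Nat.exists_eq_add_of_le hjn
  rw [Nat.add_sub_cancel_left]
  cases b with
  | zero => simp
  | succ b =>
    simp only [Nat.add_sub_cancel]
    push_cast
    ring

/-- The functions `g^{m,n}` are eigenfunctions of the magnetic Schrödinger operator
`L_{ν,ξ}` with eigenvalue `ν (n + 1/2)`. -/
theorem gchp_eigenfunction (ν : ℝ) (hν : 0 < ν) (ξ : ℂ) (m n : ℕ)
    (g : ℂ → ℂ → ℂ)
    (hg : ∀ z w : ℂ, g z w = Complex.exp (-(w / 2) * ((ν : ℂ) * z + ξ)) * G ν ξ m n z w)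
    (z w : ℂ) :
    -(1 / 4 : ℂ) *
        (4 * deriv (fun z' : ℂ => deriv (fun w' : ℂ => g z' w') w) z
          + 2 * (((ν : ℂ) * z + ξ) * deriv (fun z' : ℂ => g z' w) z
              - ((ν : ℂ) * w + (starRingEnd ℂ) ξ) * deriv (fun w' : ℂ => g z w') w)
          - ((ν : ℂ) * z + ξ) * ((ν : ℂ) * w + (starRingEnd ℂ) ξ) * g z w)
      = (ν : ℂ) * ((n : ℂ) + 1 / 2) * g z w := by
  obtain rfl : g = fun z w =>
      Complex.exp (-(w / 2) * ((ν : ℂ) * z + ξ)) * G ν ξ m n z w := by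
    funext z w
    exact hg z w
  unfold G
  set c := (starRingEnd ℂ) ξ
  have hEw : ∀ z w : ℂ, HasDerivAt (fun w' : ℂ => Complex.exp (-(w' / 2) * ((ν : ℂ) * z + ξ)))
      (Complex.exp (-(w / 2) * ((ν : ℂ) * z + ξ)) * (-(1 / 2) * ((ν : ℂ) * z + ξ))) w :=
    fun z w => ((((hasDerivAt_id w).div_const 2).neg).mul_const _).cexp
  have hA : HasDerivAt (fun z' : ℂ => (ν : ℂ) * z' + ξ) (ν : ℂ) z := by
    simpa using ((hasDerivAt_id z).const_mul (ν : ℂ)).add_const ξ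
  have hEz : HasDerivAt (fun z' : ℂ => Complex.exp (-(w / 2) * ((ν : ℂ) * z' + ξ)))
      (Complex.exp (-(w / 2) * ((ν : ℂ) * z + ξ)) * (-(w / 2) * ν)) z :=
    (hA.const_mul _).cexp
  have hHw : ∀ z w : ℂ, HasDerivAt (fun w' : ℂ => cH m n z ((ν : ℂ) * w' + c / 2))
      (cHw m n z ((ν : ℂ) * w + c / 2) * ν) w := by
    intro z w
    have hu : HasDerivAt (fun w' : ℂ => (ν : ℂ) * w' + c / 2) (ν : ℂ) w := by
      simpa using ((hasDerivAt_id w).const_mul (ν : ℂ)).add_const (c / 2)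
    exact HasDerivAt.comp (h₂ := fun x => cH m n z x) w
      (hasDerivAt_cH_snd m n z ((ν : ℂ) * w + c / 2)) hu
  have hHz := hasDerivAt_cH_fst m n z ((ν : ℂ) * w + c / 2)
  have hHwz := hasDerivAt_cHw_fst m n z ((ν : ℂ) * w + c / 2)
  have hgw := fun z w => ((hEw z w).fun_mul (hHw z w)).deriv
  have hgz := (hEz.fun_mul hHz).deriv
  have hgwz := (((hEz.fun_mul (hA.const_mul (-(1 / 2)))).fun_mul hHz).fun_add
    (hEz.fun_mul (hHwz.mul_const (ν : ℂ)))).deriv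
  simp only [hgw]
  rw [hgwz, hgz]
  linear_combination (Complex.exp (-(w / 2) * ((ν : ℂ) * z + ξ)) * ν) *
    cH_ode m n z ((ν : ℂ) * w + c / 2)
end

section
/- Full orthogonality forces ξ = 0: fix a real ν > 0, ξ ∈ ℂ and a measurable weight ω : ℂ → ℝ, and for f, g : ℂ → ℂ set ⟨f, g⟩_ω := ∫_ℂ f(z)·conj(g(z))·ω(z) dλ(z). Write 𝔊^{m,n}(z) := G_ν^{m,n}(z, conj(z)|ξ). Assume: (H1) for all m, n, j, k the functions z ↦ 𝔊^{m,n}(z)·conj(𝔊^{j,k}(z))·ω(z) and z ↦ z·𝔊^{m,n}(z)·conj(𝔊^{j,k}(z))·ω(z) are integrable; (H2') the full system is orthogonal, i.e. ⟨𝔊^{m,n}, 𝔊^{j,k}⟩_ω = 0 whenever (m,n) ≠ (j,k). If ξ ≠ 0, then ⟨𝔊^{m,n}, 𝔊^{m,n}⟩_ω = 0 for all nonnegative integers m, n; equivalently, if ⟨𝔊^{m,n}, 𝔊^{m,n}⟩_ω ≠ 0 for some m, n, then ξ = 0. -/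
/-!
The complex Hermite polynomials satisfy the two three-term recurrences
`z H^{m,n} = H^{m+1,n} + n H^{m,n-1}` and `w H^{m,n} = H^{m,n+1} + m H^{m-1,n}`
(`cH_mul_left`, `cH_mul_right`). Write `𝔊 = 𝔊^{m,n}` and compute `⟨z 𝔊, 𝔊⟩ = ⟨𝔊, conj z 𝔊⟩` in two
ways. By the first recurrence `z 𝔊` is a combination of elements of the system other than `𝔊`, so
the value is `0`. By the second one, with `w = ν conj z + conj ξ / 2`, the function `ν conj z 𝔊` is
such a combination minus `(conj ξ / 2) 𝔊`, so `ν` times the value is `-(ξ / 2) ⟨𝔊, 𝔊⟩`.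
Hence `ξ ⟨𝔊, 𝔊⟩ = 0`.
-/

open Complex MeasureTheory

/-- Binomial form of the complex Hermite polynomials. The summation bound may be any `N > m`, since
the binomial coefficients vanish beyond `min m n`. -/
lemma cH_eq_sum_choose (m n N : ℕ) (hN : m < N) (z w : ℂ) :
    cH m n z w = ∑ j ∈ Finset.range N,
      (-1 : ℂ) ^ j * j.factorial * m.choose j * n.choose j * z ^ (m - j) * w ^ (n - j) := by
  have hsub : Finset.range (min m n + 1) ⊆ Finset.range N := by
    intro j hj
    simp only [Finset.mem_range] at hj ⊢
    omega
  rw [← Finset.sum_subset hsub, cH, Finset.mul_sum]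
  · refine Finset.sum_congr rfl fun j hj => ?_
    have hj' := Finset.mem_range.1 hj
    rw [Nat.cast_choose ℂ (show j ≤ m by omega), Nat.cast_choose ℂ (show j ≤ n by omega)]
    have h1 : (j.factorial : ℂ) ≠ 0 := by exact_mod_cast j.factorial_ne_zero
    have h2 : ((m - j).factorial : ℂ) ≠ 0 := by exact_mod_cast (m - j).factorial_ne_zero
    have h3 : ((n - j).factorial : ℂ) ≠ 0 := by exact_mod_cast (n - j).factorial_ne_zero
    field_simp
  · intro j _ hj
    have hj' : m < j ∨ n < j := by
      simp only [Finset.mem_range] at hj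
      omega
    rcases hj' with h | h <;> simp [Nat.choose_eq_zero_of_lt h]

lemma cH_symm (m n : ℕ) (z w : ℂ) : cH m n z w = cH n m w z := by
  unfold cH
  rw [min_comm, mul_comm (m.factorial : ℂ)]
  congr 1
  refine Finset.sum_congr rfl fun j _ => ?_
  ring

/-- At `n = 0` the truncated index `n - 1` is harmless, as its coefficient is `0`. -/
lemma cH_mul_left (m n : ℕ) (z w : ℂ) :
    z * cH m n z w = cH (m + 1) n z w + n * cH m (n - 1) z w := by
  have hz : ∀ j, (m.choose j : ℂ) * (z * z ^ (m - j)) = m.choose j * z ^ (m + 1 - j) := by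
    intro j
    rcases le_or_gt j m with h | h
    · rw [Nat.succ_sub h, pow_succ']
    · simp [Nat.choose_eq_zero_of_lt h]
  rcases n with _ | n
  · simp [cH, pow_succ']
    have h1 : (m.factorial : ℂ) ≠ 0 := by exact_mod_cast m.factorial_ne_zero
    have h2 : ((m + 1).factorial : ℂ) ≠ 0 := by exact_mod_cast (m + 1).factorial_ne_zero
    field_simp
  · rw [cH_eq_sum_choose m (n + 1) (m + 2) (by omega),
      cH_eq_sum_choose (m + 1) (n + 1) (m + 2) (by omega),
      Nat.add_sub_cancel, cH_eq_sum_choose m n (m + 1) (by omega),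
      Finset.sum_range_succ' _ (m + 1), Finset.sum_range_succ' _ (m + 1),
      mul_add, Finset.mul_sum, Finset.mul_sum]
    rw [add_right_comm, ← Finset.sum_add_distrib]
    congr 1
    · refine Finset.sum_congr rfl fun i _ => ?_
      have hz' := hz (i + 1)
      rw [Nat.add_sub_add_right] at hz'
      rw [Nat.add_sub_add_right, Nat.add_sub_add_right, Nat.choose_succ_succ m i,
        Nat.factorial_succ]
      have hc : ((n : ℂ) + 1) * n.choose i = (n + 1).choose (i + 1) * (i + 1) := by
        exact_mod_cast Nat.add_one_mul_choose_eq n i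
      push_cast
      linear_combination ((-1 : ℂ) ^ (i + 1) * (i + 1) * i.factorial * (n + 1).choose (i + 1)
          * w ^ (n - i)) * hz'
        - ((-1 : ℂ) ^ i * i.factorial * m.choose i * z ^ (m - i) * w ^ (n - i)) * hc
    · simp [pow_succ']
      ring

lemma cH_mul_right (m n : ℕ) (z w : ℂ) :
    w * cH m n z w = cH m (n + 1) z w + m * cH (m - 1) n z w := by
  rw [cH_symm m n, cH_symm m (n + 1), cH_symm (m - 1) n, cH_mul_left]

/-- Full orthogonality of the GCHP system forces the parameter `ξ` to vanish
(otherwise all the norms are zero). -/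
theorem gchp_orthogonality_forces_xi_zero (ν : ℝ) (hν : 0 < ν) (ξ : ℂ)
    (ω : ℂ → ℝ) (hω : Measurable ω)
    (H1 : ∀ m n j k : ℕ,
      Integrable (fun z : ℂ =>
        G ν ξ m n z ((starRingEnd ℂ) z) *
          (starRingEnd ℂ) (G ν ξ j k z ((starRingEnd ℂ) z)) * (ω z : ℂ)) ∧
      Integrable (fun z : ℂ =>
        z * G ν ξ m n z ((starRingEnd ℂ) z) *
          (starRingEnd ℂ) (G ν ξ j k z ((starRingEnd ℂ) z)) * (ω z : ℂ)))
    (H2' : ∀ m n j k : ℕ, (m, n) ≠ (j, k) →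
      ∫ z : ℂ, G ν ξ m n z ((starRingEnd ℂ) z) *
        (starRingEnd ℂ) (G ν ξ j k z ((starRingEnd ℂ) z)) * (ω z : ℂ) = 0)
    (hξ : ξ ≠ 0) :
    ∀ m n : ℕ,
      ∫ z : ℂ, G ν ξ m n z ((starRingEnd ℂ) z) *
        (starRingEnd ℂ) (G ν ξ m n z ((starRingEnd ℂ) z)) * (ω z : ℂ) = 0 := by
  intro m n
  set F : ℕ → ℕ → ℂ → ℂ := fun a b z => G ν ξ a b z ((starRingEnd ℂ) z) with hF
  have hI : ∀ a b j k, Integrable fun z : ℂ => F a b z * (starRingEnd ℂ) (F j k z) * (ω z : ℂ) :=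
    fun a b j k => (H1 a b j k).1
  have hO : ∀ a b j k, (a, b) ≠ (j, k) →
      ∫ z : ℂ, F a b z * (starRingEnd ℂ) (F j k z) * (ω z : ℂ) = 0 := H2'
  change ∫ z : ℂ, F m n z * (starRingEnd ℂ) (F m n z) * (ω z : ℂ) = 0
  -- The difference of the two expansions of `ν z |𝔊|² ω`, solved for the diagonal term.
  have key : ∀ z : ℂ, ξ / 2 * (F m n z * (starRingEnd ℂ) (F m n z) * (ω z : ℂ)) =
      F m n z * (starRingEnd ℂ) (F m (n + 1) z) * (ω z : ℂ)
      + m * (F m n z * (starRingEnd ℂ) (F (m - 1) n z) * (ω z : ℂ))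
      - ν * (F (m + 1) n z * (starRingEnd ℂ) (F m n z) * (ω z : ℂ))
      - ν * n * (F m (n - 1) z * (starRingEnd ℂ) (F m n z) * (ω z : ℂ)) := by
    intro z
    have h1 : z * F m n z = F (m + 1) n z + n * F m (n - 1) z := cH_mul_left m n z _
    have h2 : ((ν : ℂ) * (starRingEnd ℂ) z + (starRingEnd ℂ) ξ / 2) * F m n z
        = F m (n + 1) z + m * F (m - 1) n z := cH_mul_right m n z _
    have h3 := congrArg (starRingEnd ℂ) h2
    simp only [map_mul, map_add, map_div₀, Complex.conj_conj, Complex.conj_ofReal, map_natCast,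
      map_ofNat] at h3
    linear_combination (F m n z * (ω z : ℂ)) * h3
      - (ν * (starRingEnd ℂ) (F m n z) * (ω z : ℂ)) * h1
  have hint := integral_congr_ae (μ := volume) (Filter.Eventually.of_forall key)
  have i1 := hI m n m (n + 1)
  have i2 := (hI m n (m - 1) n).const_mul (m : ℂ)
  have i3 := (hI (m + 1) n m n).const_mul (ν : ℂ)
  have i4 := (hI m (n - 1) m n).const_mul (ν * n : ℂ)
  have i12 := i1.add i2
  have i123 := i12.sub i3
  rw [integral_sub (by exact i123) i4, integral_sub (by exact i12) i3, integral_add i1 i2] at hint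
  simp only [integral_const_mul] at hint
  have e1 := hO m n m (n + 1) (by simp)
  have e3 := hO (m + 1) n m n (by simp)
  have e2 : (m : ℂ) * ∫ z : ℂ, F m n z * (starRingEnd ℂ) (F (m - 1) n z) * (ω z : ℂ) = 0 := by
    rcases m with _ | m
    · simp
    · rw [hO _ _ _ _ (by simp), mul_zero]
  have e4 : (ν * n : ℂ) * ∫ z : ℂ, F m (n - 1) z * (starRingEnd ℂ) (F m n z) * (ω z : ℂ) = 0 := by
    rcases n with _ | n
    · simp
    · rw [hO _ _ _ _ (by simp), mul_zero]
  rw [e1, e2, e3, e4] at hint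
  have hξ2 : ξ / 2 ≠ 0 := div_ne_zero hξ two_ne_zero
  exact (mul_eq_zero.1 (hint.trans (by simp))).resolve_left hξ2
end
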